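/- Let n ≥ 1, let x_1, …, x_n be real numbers, and let θ ∈ ℍ. Set w = (1/n)·∑_{j=1}^n (x_j − θ)/(x_j − conj(θ)). Then w ≠ 1 and q(θ) = conj( (θ − conj(θ)·w)/(1 − w) ); that is, q(θ) is the complex conjugate of the image of w under the inverse of the Möbius map ζ ↦ (ζ − θ)/(ζ − conj(θ)). -/

import Mathlib

open Complex Finset

/-- The polynomial `h(θ) = ∏ (x_j − θ)`. -/
noncomputable def hpoly {n : ℕ} (x : Fin n → ℝ) : ℂ → ℂ :=
  fun θ => ∏ j, ((x j : ℂ) - θ)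

/-- `q(θ) = θ − n·h(θ)/h'(θ)`. -/
noncomputable def qmap {n : ℕ} (x : Fin n → ℝ) : ℂ → ℂ :=
  fun θ => θ - (n : ℂ) * hpoly x θ / deriv (hpoly x) θ

theorem deriv_hpoly_aux {n : ℕ} (x : Fin n → ℝ) (θ : ℂ) (h0 : ∀ j, (x j : ℂ) - θ ≠ 0) :
    deriv (hpoly x) θ = -(hpoly x θ * ∑ j, 1 / ((x j : ℂ) - θ)) := by
  have h1 : HasDerivAt (hpoly x)
      (∑ i, (∏ j ∈ (univ : Finset (Fin n)).erase i, ((x j : ℂ) - θ)) • (-1 : ℂ)) θ := by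
    have := HasDerivAt.fun_finsetProd (u := (univ : Finset (Fin n)))
      (f := fun j (t : ℂ) => (x j : ℂ) - t) (f' := fun _ => (-1 : ℂ)) (x := θ)
      (fun j _ => by simpa using (hasDerivAt_id θ).const_sub (x j : ℂ))
    exact this
  rw [h1.deriv, Finset.mul_sum, ← Finset.sum_neg_distrib]
  refine Finset.sum_congr rfl fun i _ => ?_
  have := Finset.mul_prod_erase (univ : Finset (Fin n)) (fun j => (x j : ℂ) - θ) (mem_univ i)
  unfold hpoly
  rw [← this]
  have := h0 i
  simp only [smul_eq_mul]
  field_simp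

theorem stmt_2 (n : ℕ) (hn : 1 ≤ n) (x : Fin n → ℝ) (θ : ℂ) (hθ : 0 < θ.im)
    (w : ℂ)
    (hw : w = (1 / (n : ℂ)) * ∑ j, ((x j : ℂ) - θ) / ((x j : ℂ) - (starRingEnd ℂ) θ)) :
    w ≠ 1 ∧
      qmap x θ =
        (starRingEnd ℂ) ((θ - (starRingEnd ℂ) θ * w) / (1 - w)) := by
  have h0 : ∀ j, (x j : ℂ) - θ ≠ 0 := fun j h => by
    have := congrArg Complex.im h
    simp at this
    exact hθ.ne' this
  have hn0 : (n : ℂ) ≠ 0 := by exact_mod_cast (by omega : n ≠ 0)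
  have hd := deriv_hpoly_aux x θ h0
  have hh : hpoly x θ ≠ 0 := Finset.prod_ne_zero_iff.mpr fun j _ => h0 j
  set S : ℂ := ∑ j, 1 / ((x j : ℂ) - θ) with hS
  have hSim : 0 < S.im := by
    rw [hS, Complex.im_sum]
    haveI : Nonempty (Fin n) := ⟨⟨0, hn⟩⟩
    refine Finset.sum_pos (fun j _ => ?_) univ_nonempty
    rw [one_div, Complex.inv_im]
    have := Complex.normSq_pos.mpr (h0 j)
    refine div_pos ?_ this
    simpa using hθ
  have hS0 : S ≠ 0 := fun h => by rw [h] at hSim; simp at hSim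
  have hc : θ - (starRingEnd ℂ) θ ≠ 0 := fun h => by
    have := congrArg Complex.im h
    simp at this
    linarith
  have hwc : (starRingEnd ℂ) w = 1 + (θ - (starRingEnd ℂ) θ) * S / n := by
    have e : ∑ j, ((x j : ℂ) - (starRingEnd ℂ) θ) / ((x j : ℂ) - θ)
        = n + (θ - (starRingEnd ℂ) θ) * S := by
      rw [hS, Finset.mul_sum]
      have : (n : ℂ) = ∑ j : Fin n, (1 : ℂ) := by simp
      rw [this, ← Finset.sum_add_distrib]
      refine Finset.sum_congr rfl fun j _ => ?_
      have := h0 j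
      field_simp
      ring
    rw [hw]
    simp only [map_mul, map_div₀, map_one, map_natCast, map_sum, map_sub, Complex.conj_ofReal,
      Complex.conj_conj]
    rw [e]
    field_simp
  have hne : (θ - (starRingEnd ℂ) θ) * S / n ≠ 0 := div_ne_zero (mul_ne_zero hc hS0) hn0
  refine ⟨fun h => ?_, ?_⟩
  · rw [h, map_one] at hwc
    exact hne (by linear_combination -hwc)
  · simp only [map_div₀, map_sub, map_mul, map_one, Complex.conj_conj]
    rw [hwc]
    unfold qmap
    rw [hd]
    have e1 : 1 - (1 + (θ - (starRingEnd ℂ) θ) * S / n) = -((θ - (starRingEnd ℂ) θ) * S / n) := by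
      ring
    rw [e1, eq_div_iff (neg_ne_zero.mpr hne)]
    field_simp
    ring
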